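/- Let ε > 0, L > 0, T > 0, and let v : [0, T] × ℝ → ℝ be smooth (continuously differentiable in t and four times continuously differentiable in x, with continuous mixed derivatives), L-periodic in x, and satisfy the regularized deterministic thin-film equation ∂ₜv = −∂ₓ( f_ε(v) ∂ₓ³ v ) on [0, T] × ℝ. Then for every t ∈ [0, T], ∫₀^L (∂ₓ v(t, x))² dx + 2 ∫₀^t ∫₀^L f_ε(v(s,x)) (∂ₓ³ v(s,x))² dx ds = ∫₀^L (∂ₓ v(0, x))² dx. -/

import Mathlib

/-!
Since `∂ₜ` and `∂ₓ` commute, the increment of `∫ (∂ₓv)²` is the time integral of `2 ∫ ∂ₓv ∂ₓ∂ₜv`.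
On a solution, `∂ₜv = -∂ₓF` with `F = f(v) ∂ₓ³v`, and two integrations by parts over a period
turn `∫ ∂ₓv ∂ₓ∂ₜv` into `∫ ∂ₓ²v ∂ₓF` and then into `-∫ ∂ₓ³v F`.
-/

open Function MeasureTheory Set
open scoped ContDiff Interval

section PartialDerivatives

variable {𝕜 E : Type*} [NormedAddCommGroup E]

section NontriviallyNormedField

variable [NontriviallyNormedField 𝕜] [NormedSpace 𝕜 E]

theorem hasDerivAt_fst_of_hasFDerivAt {G : 𝕜 × 𝕜 → E} {G' : 𝕜 × 𝕜 →L[𝕜] E} {t x : 𝕜}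
    (hG : HasFDerivAt G G' (t, x)) : HasDerivAt (fun τ ↦ G (τ, x)) (G' (1, 0)) t :=
  hG.comp_hasDerivAt t ((hasDerivAt_id t).prodMk (hasDerivAt_const t x))

theorem hasDerivAt_snd_of_hasFDerivAt {G : 𝕜 × 𝕜 → E} {G' : 𝕜 × 𝕜 →L[𝕜] E} {t x : 𝕜}
    (hG : HasFDerivAt G G' (t, x)) : HasDerivAt (fun y ↦ G (t, y)) (G' (0, 1)) x :=
  hG.comp_hasDerivAt x ((hasDerivAt_const x t).prodMk (hasDerivAt_id x))

theorem contDiff_uncurry_deriv_fst {g : 𝕜 → 𝕜 → E} {m n : ℕ∞ω}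
    (hg : ContDiff 𝕜 n (uncurry g)) (hmn : m + 1 ≤ n) :
    ContDiff 𝕜 m (uncurry fun t x ↦ deriv (fun τ ↦ g τ x) t) :=
  ContDiff.fderiv_apply (f := fun (p : 𝕜 × 𝕜) τ ↦ g τ p.2)
    (hg.comp (contDiff_snd.prodMk (contDiff_snd.comp contDiff_fst)))
    contDiff_fst contDiff_const hmn

theorem contDiff_uncurry_deriv_snd {g : 𝕜 → 𝕜 → E} {m n : ℕ∞ω}
    (hg : ContDiff 𝕜 n (uncurry g)) (hmn : m + 1 ≤ n) :
    ContDiff 𝕜 m (uncurry fun t x ↦ deriv (g t) x) :=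
  ContDiff.fderiv_apply (f := fun (p : 𝕜 × 𝕜) y ↦ g p.1 y)
    (hg.comp ((contDiff_fst.comp contDiff_fst).prodMk contDiff_snd))
    contDiff_snd contDiff_const hmn

end NontriviallyNormedField

theorem deriv_deriv_comm_of_contDiff [RCLike 𝕜] [NormedSpace 𝕜 E] {g : 𝕜 → 𝕜 → E}
    (hg : ContDiff 𝕜 2 (uncurry g)) (t x : 𝕜) :
    deriv (fun τ ↦ deriv (g τ) x) t = deriv (fun y ↦ deriv (fun τ ↦ g τ y) t) x := by
  have hasFDerivAt_g (p : 𝕜 × 𝕜) : HasFDerivAt (uncurry g) (fderiv 𝕜 (uncurry g) p) p :=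
    (hg.differentiable two_ne_zero p).hasFDerivAt
  have hasFDerivAt_apply (w : 𝕜 × 𝕜) : HasFDerivAt (fun p ↦ fderiv 𝕜 (uncurry g) p w)
      ((fderiv 𝕜 (fderiv 𝕜 (uncurry g)) (t, x)).flip w) (t, x) :=
    (ContinuousLinearMap.apply 𝕜 E w).hasFDerivAt.comp (t, x)
      ((hg.fderiv_right (m := 1) one_add_one_eq_two.le).differentiable
        one_ne_zero (t, x)).hasFDerivAt
  have symm : IsSymmSndFDerivAt 𝕜 (uncurry g) (t, x) :=
    hg.contDiffAt.isSymmSndFDerivAt (by simp)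
  calc deriv (fun τ ↦ deriv (g τ) x) t
      = deriv (fun τ ↦ fderiv 𝕜 (uncurry g) (τ, x) (0, 1)) t := by
        congr! 2 with τ
        exact (hasDerivAt_snd_of_hasFDerivAt (hasFDerivAt_g (τ, x))).deriv
    _ = fderiv 𝕜 (fderiv 𝕜 (uncurry g)) (t, x) (1, 0) (0, 1) :=
        (hasDerivAt_fst_of_hasFDerivAt (hasFDerivAt_apply (0, 1))).deriv
    _ = fderiv 𝕜 (fderiv 𝕜 (uncurry g)) (t, x) (0, 1) (1, 0) := symm _ _
    _ = deriv (fun y ↦ fderiv 𝕜 (uncurry g) (t, y) (1, 0)) x :=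
        (hasDerivAt_snd_of_hasFDerivAt (hasFDerivAt_apply (1, 0))).deriv.symm
    _ = deriv (fun y ↦ deriv (fun τ ↦ g τ y) t) x := by
        congr! 2 with y
        exact (hasDerivAt_fst_of_hasFDerivAt (hasFDerivAt_g (t, y))).deriv.symm

end PartialDerivatives

theorem integral_sub_integral_eq_integral_integral_deriv {E : Type*} [NormedAddCommGroup E]
    [NormedSpace ℝ E] [CompleteSpace E] {F : ℝ → ℝ → E} (hF : ContDiff ℝ 1 (uncurry F))
    (a b c d : ℝ) :
    (∫ x in c..d, F b x) - ∫ x in c..d, F a x =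
      ∫ s in a..b, ∫ x in c..d, deriv (fun τ ↦ F τ x) s := by
  have hF' : Continuous (uncurry fun s x ↦ deriv (fun τ ↦ F τ x) s) :=
    (contDiff_uncurry_deriv_fst (m := 0) hF (zero_add 1).le).continuous
  have integrable_slice (s : ℝ) : IntervalIntegrable (F s) volume c d :=
    (hF.continuous.uncurry_left s).intervalIntegrable c d
  have increment (x : ℝ) : ∫ s in a..b, deriv (fun τ ↦ F τ x) s = F b x - F a x :=
    intervalIntegral.integral_deriv_eq_sub
      (fun s _ ↦ (hF.comp (contDiff_prodMk_left x)).differentiable one_ne_zero s)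
      ((hF'.uncurry_right x).intervalIntegrable a b)
  have integrable_deriv : IntegrableOn (uncurry fun s x ↦ deriv (fun τ ↦ F τ x) s)
      (Ι a b ×ˢ Ι c d) :=
    (hF'.continuousOn.integrableOn_compact (isCompact_uIcc.prod isCompact_uIcc)).mono_set
      (prod_mono uIoc_subset_uIcc uIoc_subset_uIcc)
  rw [intervalIntegral_intervalIntegral_swap integrable_deriv,
    ← intervalIntegral.integral_sub (integrable_slice b) (integrable_slice a)]
  simp only [increment]

theorem periodic_deriv {𝕜 E : Type*} [NontriviallyNormedField 𝕜] [NormedAddCommGroup E]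
    [NormedSpace 𝕜 E] {f : 𝕜 → E} {c : 𝕜} (hf : Periodic f c) : Periodic (deriv f) c := by
  intro x
  rw [← deriv_comp_add_const, hf.funext]

theorem integral_mul_deriv_eq_neg_of_periodic {A : Type*} [NormedRing A] [NormedAlgebra ℝ A]
    [CompleteSpace A] {u v : ℝ → A} {c : ℝ} (hu : ContDiff ℝ 1 u) (hv : ContDiff ℝ 1 v)
    (hu_per : Periodic u c) (hv_per : Periodic v c) (a : ℝ) :
    ∫ x in a..a + c, u x * deriv v x = -∫ x in a..a + c, deriv u x * v x := by
  rw [intervalIntegral.integral_mul_deriv_eq_deriv_mul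
    (fun x _ ↦ (hu.differentiable one_ne_zero x).hasDerivAt)
    (fun x _ ↦ (hv.differentiable one_ne_zero x).hasDerivAt)
    ((hu.continuous_deriv le_rfl).intervalIntegrable _ _)
    ((hv.continuous_deriv le_rfl).intervalIntegrable _ _),
    hu_per a, hv_per a, sub_self, zero_sub]

/-- The regularized mobility `f_ε` of the thin-film equation. -/
noncomputable def regularizedMobility (ε s : ℝ) : ℝ := s ^ 4 / (ε + s ^ 2)

theorem contDiff_regularizedMobility {ε : ℝ} (hε : 0 < ε) {n : ℕ∞ω} :
    ContDiff ℝ n (regularizedMobility ε) :=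
  (contDiff_id.pow 4).div (contDiff_const.add (contDiff_id.pow 2)) fun s ↦
    (add_pos_of_pos_of_nonneg hε (sq_nonneg s)).ne'

/-- The flux `f(u) ∂ₓ³u` of a film of height profile `u`; the thin-film equation with mobility `f`
says that the height changes at the rate `-∂ₓ` of this flux. -/
noncomputable def thinFilmFlux (f u : ℝ → ℝ) (x : ℝ) : ℝ := f (u x) * deriv^[3] u x

/-- The Dirichlet energy of an `L`-periodic profile, without the conventional factor `1/2`. -/
noncomputable def dirichletEnergy (L : ℝ) (u : ℝ → ℝ) : ℝ := ∫ x in (0 : ℝ)..L, deriv u x ^ 2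

/-- Half the rate at which a film of `L`-periodic height profile `u` and mobility `f` loses
`dirichletEnergy`. -/
noncomputable def thinFilmDissipation (f : ℝ → ℝ) (L : ℝ) (u : ℝ → ℝ) : ℝ :=
  ∫ x in (0 : ℝ)..L, f (u x) * deriv^[3] u x ^ 2

theorem dirichletEnergy_sub_dirichletEnergy {v : ℝ → ℝ → ℝ} (hv : ContDiff ℝ 2 (uncurry v))
    (L a b : ℝ) :
    dirichletEnergy L (v b) - dirichletEnergy L (v a) =
      ∫ s in a..b, 2 * ∫ x in (0 : ℝ)..L,
        deriv (v s) x * deriv (fun y ↦ deriv (fun τ ↦ v τ y) s) x := by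
  have hvx : ContDiff ℝ 1 (uncurry fun t x ↦ deriv (v t) x) :=
    contDiff_uncurry_deriv_snd hv one_add_one_eq_two.le
  have deriv_sq (s x : ℝ) : deriv (fun τ ↦ deriv (v τ) x ^ 2) s =
      2 * (deriv (v s) x * deriv (fun y ↦ deriv (fun τ ↦ v τ y) s) x) := by
    have hvx_at : DifferentiableAt ℝ (fun τ ↦ deriv (v τ) x) s :=
      (hvx.comp (contDiff_prodMk_left x)).differentiable one_ne_zero s
    rw [deriv_fun_pow hvx_at, deriv_deriv_comm_of_contDiff hv]
    ring
  calc dirichletEnergy L (v b) - dirichletEnergy L (v a)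
      = ∫ s in a..b, ∫ x in (0 : ℝ)..L, deriv (fun τ ↦ deriv (v τ) x ^ 2) s :=
        integral_sub_integral_eq_integral_integral_deriv
          (F := fun t x ↦ deriv (v t) x ^ 2) (hvx.pow 2) a b 0 L
    _ = _ := by simp only [deriv_sq, intervalIntegral.integral_const_mul]

section FixedTime

variable {f u : ℝ → ℝ} {L : ℝ}

theorem periodic_thinFilmFlux (f : ℝ → ℝ) (hu : Periodic u L) : Periodic (thinFilmFlux f u) L :=
  (hu.comp f).mul (periodic_deriv (periodic_deriv (periodic_deriv hu)))

theorem contDiff_thinFilmFlux {n : ℕ} (hf : ContDiff ℝ n f)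
    (hu : ContDiff ℝ (n + 3 : ℕ) u) : ContDiff ℝ n (thinFilmFlux f u) :=
  (hf.comp (hu.of_le (by exact_mod_cast n.le_add_right 3))).mul (hu.iterate_deriv' n 3)

theorem integral_deriv_mul_deriv_eq_neg_thinFilmDissipation {w : ℝ → ℝ} (hf : ContDiff ℝ 1 f)
    (hu : ContDiff ℝ 4 u) (hu_per : Periodic u L) (hw : ContDiff ℝ 1 w)
    (hwu : ∀ x, w x = -deriv (thinFilmFlux f u) x) :
    ∫ x in (0 : ℝ)..L, deriv u x * deriv w x = -thinFilmDissipation f L u := by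
  have hu' : ContDiff ℝ 1 (deriv u) := ContDiff.iterate_deriv' 1 1 (hu.of_le (by norm_num))
  have hu'' : ContDiff ℝ 1 (deriv (deriv u)) := ContDiff.iterate_deriv' 1 2 (hu.of_le (by norm_num))
  have hF : ContDiff ℝ 1 (thinFilmFlux f u) := contDiff_thinFilmFlux (n := 1) hf hu
  have hu'_per := periodic_deriv hu_per
  have hF_per := periodic_thinFilmFlux f hu_per
  have hw_per : Periodic w L := fun x ↦ by rw [hwu, hwu, periodic_deriv hF_per]
  calc ∫ x in (0 : ℝ)..L, deriv u x * deriv w x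
      = -∫ x in (0 : ℝ)..L, deriv (deriv u) x * w x := by
        simpa only [zero_add] using integral_mul_deriv_eq_neg_of_periodic hu' hw hu'_per hw_per 0
    _ = ∫ x in (0 : ℝ)..L, deriv (deriv u) x * deriv (thinFilmFlux f u) x := by
        simp only [hwu, mul_neg, intervalIntegral.integral_neg, neg_neg]
    _ = -∫ x in (0 : ℝ)..L, deriv^[3] u x * thinFilmFlux f u x := by
        simpa only [zero_add, iterate_succ_apply', iterate_zero_apply] using
          integral_mul_deriv_eq_neg_of_periodic hu'' hF (periodic_deriv hu'_per) hF_per 0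
    _ = -thinFilmDissipation f L u := by
        simp only [thinFilmFlux, thinFilmDissipation, sq, mul_left_comm]

end FixedTime

theorem stmt_12_general {f : ℝ → ℝ} {v : ℝ → ℝ → ℝ} {L a b : ℝ} (hf : ContDiff ℝ 1 f)
    (hv : ContDiff ℝ 2 (uncurry v)) (hv_slice : ∀ t ∈ [[a, b]], ContDiff ℝ 4 (v t))
    (hper : ∀ t ∈ [[a, b]], Periodic (v t) L)
    (heq : ∀ t ∈ [[a, b]], ∀ x, deriv (fun τ ↦ v τ x) t = -deriv (thinFilmFlux f (v t)) x) :
    dirichletEnergy L (v b) + 2 * ∫ s in a..b, thinFilmDissipation f L (v s) =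
      dirichletEnergy L (v a) := by
  have energy_rate : ∀ s ∈ [[a, b]],
      2 * ∫ x in (0 : ℝ)..L, deriv (v s) x * deriv (fun y ↦ deriv (fun τ ↦ v τ y) s) x =
        -2 * thinFilmDissipation f L (v s) := fun s hs ↦ by
    have hvt : ContDiff ℝ 1 (fun y ↦ deriv (fun τ ↦ v τ y) s) :=
      (contDiff_uncurry_deriv_fst hv one_add_one_eq_two.le).comp (contDiff_prodMk_right s)
    rw [integral_deriv_mul_deriv_eq_neg_thinFilmDissipation hf (hv_slice s hs) (hper s hs) hvt
      (heq s hs), mul_neg, neg_mul]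
  have energy_loss := dirichletEnergy_sub_dirichletEnergy hv L a b
  rw [intervalIntegral.integral_congr energy_rate, intervalIntegral.integral_const_mul]
    at energy_loss
  linarith

/-- Energy identity (Section 3) for the deterministic regularized thin-film dynamics:
if `v` is smooth, `L`-periodic in `x`, and solves `∂ₜv = −∂ₓ(f_ε(v) ∂ₓ³v)` on
`[0,T] × ℝ` with `f_ε(s) = s⁴/(ε+s²)`, then for every `t ∈ [0,T]`,
`∫₀ᴸ (∂ₓv(t))² + 2∫₀ᵗ∫₀ᴸ f_ε(v)(∂ₓ³v)² = ∫₀ᴸ (∂ₓv(0))²`. -/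
theorem stmt_12 (ε L T : ℝ) (hε : 0 < ε) (hL : 0 < L) (hT : 0 < T)
    (v : ℝ → ℝ → ℝ) (hv : ContDiff ℝ (⊤ : ℕ∞) (Function.uncurry v))
    (hper : ∀ t, Function.Periodic (v t) L)
    (heq : ∀ t ∈ Set.Icc (0 : ℝ) T, ∀ x : ℝ,
      deriv (fun τ => v τ x) t =
        -deriv (fun y => (v t y ^ 4 / (ε + v t y ^ 2)) * deriv^[3] (v t) y) x) :
    ∀ t ∈ Set.Icc (0 : ℝ) T,
      (∫ x in (0:ℝ)..L, (deriv (v t) x) ^ 2) +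
        2 * ∫ s in (0:ℝ)..t, ∫ x in (0:ℝ)..L,
          (v s x ^ 4 / (ε + v s x ^ 2)) * (deriv^[3] (v s) x) ^ 2 =
      ∫ x in (0:ℝ)..L, (deriv (v 0) x) ^ 2 := by
  intro t ht
  have hIcc : [[0, t]] ⊆ Icc 0 T := uIcc_of_le ht.1 ▸ Icc_subset_Icc_right ht.2
  exact stmt_12_general (contDiff_regularizedMobility hε) (hv.of_le ENat.LEInfty.out)
    (fun s _ ↦ (hv.comp (contDiff_prodMk_right s)).of_le ENat.LEInfty.out)
    (fun s _ ↦ hper s) fun s hs ↦ heq s (hIcc hs)
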